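/- Let $d$ be a positive integer with $d \equiv 1 \pmod 8$ which is not a perfect square, and assume that at least one of the equations $a^2 - d b^2 = 8$ and $a^2 - d b^2 = -8$ has a solution in integers $a, b$. Then both equations $a^2 - d b^2 = 8$ and $a^2 - d b^2 = -8$ have integer solutions if and only if the equation $s^2 - d t^2 = -4$ has a solution in integers $s, t$. -/

import Mathlib

theorem aux_odd (d a b n : ℤ) (hd8 : d ≡ 1 [ZMOD 8]) (hn : n = 8 ∨ n = -8)
    (h : a ^ 2 - d * b ^ 2 = n) : a % 2 = 1 ∧ b % 2 = 1 := by
  obtain ⟨k, rfl⟩ : ∃ k, d = 8 * k + 1 := ⟨d / 8, by unfold Int.ModEq at hd8; omega⟩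
  obtain ⟨x, hx⟩ : ∃ x, a = 2 * x ∨ a = 2 * x + 1 := ⟨a / 2, by omega⟩
  obtain ⟨y, hy⟩ : ∃ y, b = 2 * y ∨ b = 2 * y + 1 := ⟨b / 2, by omega⟩
  rcases hx with rfl | rfl <;> rcases hy with rfl | rfl
  · exfalso
    obtain ⟨z, hz⟩ : ∃ z, x = 2 * z ∨ x = 2 * z + 1 := ⟨x / 2, by omega⟩
    obtain ⟨w, hw⟩ : ∃ w, y = 2 * w ∨ y = 2 * w + 1 := ⟨y / 2, by omega⟩
    rcases hz with rfl | rfl <;> rcases hw with rfl | rfl <;> ring_nf at h <;> omega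
  · exfalso
    ring_nf at h
    omega
  · exfalso
    ring_nf at h
    omega
  · omega

theorem aux_fin (d X Y : ℤ) (h : X ^ 2 - d * Y ^ 2 = -64) (hY : 4 ∣ Y) :
    ∃ s t : ℤ, s ^ 2 - d * t ^ 2 = -4 := by
  obtain ⟨t, rfl⟩ := hY
  have hX : (4 : ℤ) ^ 2 ∣ X ^ 2 := ⟨d * t ^ 2 - 4, by linarith⟩
  rw [Int.pow_dvd_pow_iff (by norm_num)] at hX
  obtain ⟨s, rfl⟩ := hX
  exact ⟨s, t, by linarith⟩

/-- Section 3.2 (Theorems 3.2.2 and 3.2.3): for a nonsquare `d ≡ 1 (mod 8)` with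
`d ∈ 𝒟`, both equations `a² - d b² = 8` and `a² - d b² = -8` are solvable iff the
fundamental unit has norm `-1`, i.e. iff `s² - d t² = -4` is solvable. -/
theorem stmt_16 (d : ℤ) (hd : 0 < d) (hd8 : d ≡ 1 [ZMOD 8]) (hsq : ¬ IsSquare d)
    (hD : ∃ a b : ℤ, a ^ 2 - d * b ^ 2 = 8 ∨ a ^ 2 - d * b ^ 2 = -8) :
    ((∃ a b : ℤ, a ^ 2 - d * b ^ 2 = 8) ∧ (∃ a b : ℤ, a ^ 2 - d * b ^ 2 = -8)) ↔
      (∃ s t : ℤ, s ^ 2 - d * t ^ 2 = -4) := by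
  constructor
  · rintro ⟨⟨a, b, h1⟩, ⟨c, e, h2⟩⟩
    obtain ⟨ha, hb⟩ := aux_odd d a b 8 hd8 (Or.inl rfl) h1
    obtain ⟨hc, he⟩ := aux_odd d c e (-8) hd8 (Or.inr rfl) h2
    have h3 : (a ^ 2 - d * b ^ 2) * (c ^ 2 - d * e ^ 2) = -64 := by rw [h1, h2]; norm_num
    have h4 : (a * e) % 2 = 1 := by rw [Int.mul_emod, ha, he]; norm_num
    have h5 : (b * c) % 2 = 1 := by rw [Int.mul_emod, hb, hc]; norm_num
    have h6 : 4 ∣ a * e + b * c ∨ 4 ∣ a * e - b * c := by omega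
    rcases h6 with h6 | h6
    · exact aux_fin d (a * c + d * b * e) _ (by rw [← h3]; ring) h6
    · exact aux_fin d (a * c - d * b * e) _ (by rw [← h3]; ring) h6
  · rintro ⟨s, t, h⟩
    obtain ⟨u, v, huv⟩ : ∃ u v : ℤ, u ^ 2 - d * v ^ 2 = -1 := by
      obtain ⟨k, rfl⟩ : ∃ k, d = 8 * k + 1 := ⟨d / 8, by unfold Int.ModEq at hd8; omega⟩
      obtain ⟨x, hx⟩ : ∃ x, s = 2 * x ∨ s = 2 * x + 1 := ⟨s / 2, by omega⟩
      obtain ⟨y, hy⟩ : ∃ y, t = 2 * y ∨ t = 2 * y + 1 := ⟨t / 2, by omega⟩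
      rcases hx with rfl | rfl <;> rcases hy with rfl | rfl
      · exact ⟨x, y, by linarith⟩
      · exfalso
        ring_nf at h
        omega
      · exfalso
        ring_nf at h
        omega
      · exfalso
        obtain ⟨p, hp⟩ := Int.even_mul_succ_self x
        obtain ⟨q, hq⟩ := Int.even_mul_succ_self y
        have : 8 * (p - q - k * (2 * y + 1) ^ 2) = -4 := by
          linear_combination h - 4 * hp + 4 * hq
        omega
    obtain ⟨a, b, h1 | h1⟩ := hD
    · refine ⟨⟨a, b, h1⟩, a * u + d * b * v, a * v + b * u, ?_⟩
      linear_combination (u ^ 2 - d * v ^ 2) * h1 + 8 * huv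
    · refine ⟨⟨a * u + d * b * v, a * v + b * u, ?_⟩, a, b, h1⟩
      linear_combination (u ^ 2 - d * v ^ 2) * h1 - 8 * huv
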